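/- For every Φ ∈ χ, every a ∈ ℂ, every g ∈ SL₂(ℤ), and every j ∈ {1,...,n}: 𝒟_j(a)(Φ|_{g,a}) = (𝒟_j(a)Φ)|_{g,a+2}, as an identity of families of functions on U. -/

import Mathlib

open Complex Real

/-- The Weierstrass function `℘₁(z;τ)`. -/
noncomputable def wp1 (z τ : ℂ) : ℂ :=
  1 / z + ∑' p : {p : ℤ × ℤ // p ≠ (0, 0)},
    (1 / (z - ((p.1.1 : ℂ) * τ + (p.1.2 : ℂ))) + 1 / ((p.1.1 : ℂ) * τ + (p.1.2 : ℂ)) +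
      z / ((p.1.1 : ℂ) * τ + (p.1.2 : ℂ)) ^ 2)

/-- The quasimodular Eisenstein series
`G₂(τ) = π²/3 + Σ_{m≠0} Σ_{l∈ℤ} (mτ+l)^{-2}` (iterated sum). -/
noncomputable def G2 (τ : ℂ) : ℂ :=
  (Real.pi : ℂ) ^ 2 / 3 +
    ∑' m : {m : ℤ // m ≠ 0}, ∑' l : ℤ, 1 / (((m : ℤ) : ℂ) * τ + (l : ℂ)) ^ 2

/-- The domain `U = {(z₁,...,z_n,τ) : Im τ > 0, z_i − z_j ∉ Λ_τ for i ≠ j}`. -/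
def Uset (n : ℕ) : Set ((Fin n → ℂ) × ℂ) :=
  {p | 0 < p.2.im ∧ ∀ i j : Fin n, i ≠ j → ∀ k l : ℤ,
    p.1 i - p.1 j ≠ (k : ℂ) * p.2 + (l : ℂ)}

/-- The componentwise differential operator `𝒟_j(a)` acting on families
`Φ = (φ_μ)_{μ∈ℕⁿ}` of functions of `(z₁,...,z_n; τ)`:
`(𝒟_j(a)Φ)_μ = 2πi·∂φ_μ/∂τ + G₂(τ)·(a·φ_μ + Σ_i φ_{μ+e_i})
+ G₂(τ)·Σ_i z_i·∂φ_μ/∂z_i − Σ_{i≠j} ℘₁(z_i−z_j;τ)·∂φ_μ/∂z_i`. -/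
noncomputable def DOp (n : ℕ) (a : ℂ) (j : Fin n)
    (Φ : (Fin n → ℕ) → (Fin n → ℂ) → ℂ → ℂ) :
    (Fin n → ℕ) → (Fin n → ℂ) → ℂ → ℂ :=
  fun μ z τ =>
    2 * Real.pi * Complex.I * deriv (fun t => Φ μ z t) τ +
      G2 τ * (a * Φ μ z τ + ∑ i : Fin n, Φ (μ + Pi.single i 1) z τ) +
      G2 τ * ∑ i : Fin n, z i * deriv (fun s => Φ μ (Function.update z i s) τ) (z i) -
      ∑ i ∈ Finset.univ.filter (fun i : Fin n => i ≠ j),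
        wp1 (z i - z j) τ * deriv (fun s => Φ μ (Function.update z i s) τ) (z i)

/-- The slash action `Φ ↦ Φ|_{g,a}` of `SL₂(ℤ)` on families `Φ = (φ_μ)_{μ∈ℕⁿ}`:
`(Φ|_{g,a})_μ(z;τ) = (Cτ+D)^{−a}·Σ_ν ((−log(Cτ+D))^{|ν|}/ν!)·φ_{μ+ν}(z/(Cτ+D); (Aτ+B)/(Cτ+D))`,
with principal branches of powers and logarithms. -/
noncomputable def SlashAct (n : ℕ) (g : Matrix.SpecialLinearGroup (Fin 2) ℤ) (a : ℂ)
    (Φ : (Fin n → ℕ) → (Fin n → ℂ) → ℂ → ℂ) :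
    (Fin n → ℕ) → (Fin n → ℂ) → ℂ → ℂ :=
  fun μ z τ =>
    ((g 1 0 : ℤ) * τ + (g 1 1 : ℤ)) ^ (-a) *
      ∑' ν : Fin n → ℕ,
        ((-Complex.log ((g 1 0 : ℤ) * τ + (g 1 1 : ℤ))) ^ (∑ i : Fin n, ν i) /
            ∏ i : Fin n, (Nat.factorial (ν i) : ℂ)) *
          Φ (μ + ν) (fun i => z i / ((g 1 0 : ℤ) * τ + (g 1 1 : ℤ)))
            (((g 0 0 : ℤ) * τ + (g 0 1 : ℤ)) / ((g 1 0 : ℤ) * τ + (g 1 1 : ℤ)))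

/-!
Put `J = Cτ + D` and let `S` be the index shift `(S Φ)_μ = ∑ᵢ φ_{μ + eᵢ}` and `E = ∑ᵢ zᵢ ∂/∂zᵢ`.
Up to the change of variable in `τ`, the slash action in weight `a` is `J ^ (-W_a)` for the operator
`W_a = a + S + E`, which commutes with it. Differentiating `J` therefore gives
`∂_τ (Φ|_a) = (∂_τ Φ)|_{a+2} - C · (W_a Φ)|_{a+1}`. The operator is
`𝒟_j(a) = 2πi ∂_τ + G₂ W_a - ∑ᵢ ℘₁(zᵢ - zⱼ) ∂ᵢ`, where `℘₁` and `∂ᵢ` transform with weight one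
each, and the anomaly in `G₂(gτ) = J² G₂(τ) - 2πi C J` compensates exactly for the term with `W_a`.
-/

section FiniteSupport

lemma hasFiniteSupport_of_forall_exists_le {ι M : Type*} [Finite ι] [Zero M] {f : (ι → ℕ) → M}
    {N : ℕ} (hf : ∀ μ, (∃ i, N ≤ μ i) → f μ = 0) : f.HasFiniteSupport := by
  classical
  have := Fintype.ofFinite ι
  exact (Set.finite_Iic fun _ ↦ N).subset fun μ hμ i ↦
    le_of_not_ge fun hi ↦ hμ (hf μ ⟨i, hi⟩)

lemma hasFiniteSupport_comp_add {A M : Type*} [Add A] [IsLeftCancelAdd A] [Zero M] {f : A → M}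
    (hf : f.HasFiniteSupport) (μ : A) : (fun ν ↦ f (μ + ν)).HasFiniteSupport :=
  hf.fun_comp_of_injective (add_right_injective μ)

end FiniteSupport

section ExponentialShift

variable {ι 𝕜 : Type*} [Fintype ι] [NontriviallyNormedField 𝕜]

/-- The series `∑_ν x^{|ν|} / ν! · f_ν`, which is the component at `0` of `exp (x S) f` for the
operator `S = shiftSum`. Only meant for families `f` of finite support. -/
noncomputable def expShift (x : 𝕜) (f : (ι → ℕ) → 𝕜) : 𝕜 :=
  ∑' ν, x ^ (∑ i, ν i) / (∏ i, ((ν i).factorial : 𝕜)) * f ν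

lemma expShift_add (x : 𝕜) {f g : (ι → ℕ) → 𝕜} (hf : f.HasFiniteSupport)
    (hg : g.HasFiniteSupport) : expShift x (f + g) = expShift x f + expShift x g := by
  simp only [expShift, Pi.add_apply, mul_add]
  exact (summable_of_hasFiniteSupport (hf.fun_mul_right _)).tsum_add
    (summable_of_hasFiniteSupport (hg.fun_mul_right _))

lemma expShift_const_mul (x c : 𝕜) (f : (ι → ℕ) → 𝕜) :
    expShift x (fun ν ↦ c * f ν) = c * expShift x f := by
  simp only [expShift, mul_left_comm _ c, tsum_mul_left]

variable [DecidableEq ι]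

/-- The operator `S` on families `(f_μ)` indexed by multi-indices, `(S f)_μ = ∑ᵢ f_{μ + eᵢ}`. -/
def shiftSum {M : Type*} [AddCommMonoid M] (f : (ι → ℕ) → M) : (ι → ℕ) → M :=
  fun μ ↦ ∑ i, f (μ + Pi.single i 1)

lemma hasFiniteSupport_shiftSum {M : Type*} [AddCommMonoid M] {f : (ι → ℕ) → M}
    (hf : f.HasFiniteSupport) : (shiftSum f).HasFiniteSupport :=
  .sum (fun i ↦ hf.fun_comp_of_injective (add_left_injective (Pi.single i 1))) _

lemma prod_factorial_add_single (ν : ι → ℕ) (i : ι) :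
    ∏ k, ((ν + Pi.single i 1 : ι → ℕ) k).factorial = (ν i + 1) * ∏ k, (ν k).factorial := by
  rw [← Finset.mul_prod_erase _ _ (Finset.mem_univ i),
    ← Finset.mul_prod_erase _ (fun k ↦ (ν k).factorial) (Finset.mem_univ i), ← mul_assoc]
  congr 1
  · simp [Nat.factorial_succ]
  · exact Finset.prod_congr rfl fun k hk ↦ by simp [Finset.ne_of_mem_erase hk]

variable [CharZero 𝕜]

lemma tsum_mul_pow_pred_div_factorial (x : 𝕜) (f : (ι → ℕ) → 𝕜) (i : ι) :
    ∑' ν : ι → ℕ, ν i * x ^ (∑ k, ν k - 1) / (∏ k, ((ν k).factorial : 𝕜)) * f ν =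
      expShift x fun ν ↦ f (ν + Pi.single i 1) := by
  rw [expShift, ← (add_left_injective (Pi.single i 1)).tsum_eq]
  · refine tsum_congr fun ν ↦ ?_
    have hsum : ∑ k, (ν + Pi.single i 1 : ι → ℕ) k = ∑ k, ν k + 1 := by
      simp [Finset.sum_add_distrib]
    have hi : (ν i + 1 : 𝕜) ≠ 0 := by exact_mod_cast (ν i).succ_ne_zero
    rw [hsum, Nat.add_sub_cancel, ← Nat.cast_prod, prod_factorial_add_single]
    push_cast [Pi.add_apply, Pi.single_eq_same]
    rw [mul_div_mul_left _ _ hi]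
  · intro ν hν
    have hi : ν i ≠ 0 := fun h ↦ hν (by simp [h])
    refine ⟨ν - Pi.single i 1, tsub_add_cancel_of_le (update_le_iff.2 ⟨?_, ?_⟩)⟩
    · exact Nat.one_le_iff_ne_zero.2 hi
    · exact fun k _ ↦ Nat.zero_le _

lemma expShift_shiftSum (x : 𝕜) {f : (ι → ℕ) → 𝕜} (hf : f.HasFiniteSupport) :
    expShift x (shiftSum f) =
      ∑' ν : ι → ℕ, (∑ i, ν i : ℕ) * x ^ (∑ i, ν i - 1) / (∏ i, ((ν i).factorial : 𝕜)) * f ν := by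
  have hsummable (i : ι) : Summable fun ν : ι → ℕ ↦
      ν i * x ^ (∑ k, ν k - 1) / (∏ k, ((ν k).factorial : 𝕜)) * f ν :=
    summable_of_hasFiniteSupport (hf.fun_mul_right _)
  have hshift (i : ι) : Summable fun ν : ι → ℕ ↦
      x ^ (∑ k, ν k) / (∏ k, ((ν k).factorial : 𝕜)) * f (ν + Pi.single i 1) :=
    summable_of_hasFiniteSupport
      ((hf.fun_comp_of_injective (add_left_injective (Pi.single i 1))).fun_mul_right _)
  calc expShift x (shiftSum f)
      = ∑ i, expShift x fun ν ↦ f (ν + Pi.single i 1) := by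
        simp only [expShift, shiftSum, Finset.mul_sum]
        exact Summable.tsum_finsetSum fun i _ ↦ hshift i
    _ = _ := by
        simp only [← tsum_mul_pow_pred_div_factorial, Nat.cast_sum, Finset.sum_mul, Finset.sum_div]
        exact (Summable.tsum_finsetSum fun i _ ↦ hsummable i).symm

lemma hasDerivAt_expShift {u : 𝕜 → 𝕜} {u' t : 𝕜} {f : (ι → ℕ) → 𝕜 → 𝕜}
    {f' : (ι → ℕ) → 𝕜} (hu : HasDerivAt u u' t) (hf : ∀ ν, HasDerivAt (f ν) (f' ν) t)
    (hfin : f.HasFiniteSupport) :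
    HasDerivAt (fun s ↦ expShift (u s) (f · s))
      (u' * expShift (u t) (shiftSum (f · t)) + expShift (u t) f') t := by
  have hzero (ν : ι → ℕ) (hν : ν ∉ hfin.toFinset) : f ν = 0 :=
    by_contra fun h ↦ hν (hfin.mem_toFinset.2 h)
  have hzero' (ν : ι → ℕ) (hν : ν ∉ hfin.toFinset) : f' ν = 0 :=
    (hf ν).unique (by simp [hzero ν hν])
  have hsum (s : 𝕜) : expShift (u s) (f · s) = ∑ ν ∈ hfin.toFinset,
      u s ^ (∑ i, ν i) / (∏ i, ((ν i).factorial : 𝕜)) * f ν s :=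
    tsum_eq_sum fun ν hν ↦ by simp [hzero ν hν]
  rw [funext hsum, expShift_shiftSum _ (hfin.fun_comp (g := (· t)) rfl), expShift,
    tsum_eq_sum (s := hfin.toFinset) fun ν hν ↦ by simp [hzero ν hν],
    tsum_eq_sum (s := hfin.toFinset) fun ν hν ↦ by simp [hzero' ν hν],
    Finset.mul_sum, ← Finset.sum_add_distrib]
  refine HasDerivAt.fun_sum fun ν _ ↦ (((hu.fun_pow _).div_const _).fun_mul (hf ν)).congr_deriv ?_
  ring

end ExponentialShift

section PartialDerivatives

variable {ι 𝕜 : Type*} [NontriviallyNormedField 𝕜]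

/-- The partial derivative `∂φ/∂τ` of a function `φ(z; τ)`. -/
noncomputable def partialTau (φ : (ι → 𝕜) → 𝕜 → 𝕜) : (ι → 𝕜) → 𝕜 → 𝕜 :=
  fun z τ ↦ deriv (fun t ↦ φ z t) τ

lemma partialTau_zero : partialTau (0 : (ι → 𝕜) → 𝕜 → 𝕜) = 0 := by
  ext z τ
  exact deriv_const τ 0

variable [DecidableEq ι]

/-- The partial derivative `∂φ/∂zᵢ` of a function `φ(z; τ)`. -/
noncomputable def partialZ (i : ι) (φ : (ι → 𝕜) → 𝕜 → 𝕜) : (ι → 𝕜) → 𝕜 → 𝕜 :=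
  fun z τ ↦ deriv (fun s ↦ φ (Function.update z i s) τ) (z i)

lemma partialZ_zero (i : ι) : partialZ i (0 : (ι → 𝕜) → 𝕜 → 𝕜) = 0 := by
  ext z
  exact deriv_const (z i) 0

variable [Fintype ι]

/-- The Euler operator `∑ᵢ zᵢ ∂/∂zᵢ` acting on functions `φ(z; τ)`. -/
noncomputable def eulerZ (φ : (ι → 𝕜) → 𝕜 → 𝕜) : (ι → 𝕜) → 𝕜 → 𝕜 :=
  fun z τ ↦ ∑ i, z i * partialZ i φ z τ

variable {φ : (ι → 𝕜) → 𝕜 → 𝕜} {L : (ι → 𝕜) × 𝕜 →L[𝕜] 𝕜} {z : ι → 𝕜} {τ : 𝕜}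

lemma hasFDerivAt_apply_eq_sum_partial (hL : HasFDerivAt φ.uncurry L (z, τ)) (u : ι → 𝕜)
    (s : 𝕜) : L (u, s) = s * partialTau φ z τ + ∑ i, u i * partialZ i φ z τ := by
  have htau : partialTau φ z τ = L (0, 1) :=
    (hL.comp_hasDerivAt τ ((hasDerivAt_const τ z).prodMk (hasDerivAt_id τ))).deriv
  have hz (i : ι) : partialZ i φ z τ = L (Pi.single i 1, 0) := by
    rw [← Function.update_eq_self i z] at hL
    exact (hL.comp_hasDerivAt (z i)
      ((hasDerivAt_update z i (z i)).prodMk (hasDerivAt_const _ τ))).deriv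
  have hdecomp : (u, s) = s • ((0, 1) : (ι → 𝕜) × 𝕜) +
      ∑ i, u i • ((Pi.single i 1, 0) : (ι → 𝕜) × 𝕜) := by
    ext k
    · simp [Prod.fst_sum, Finset.sum_apply, Pi.single_apply]
    · simp [Prod.snd_sum]
  simp only [hdecomp, map_add, map_sum, map_smul, smul_eq_mul, htau, hz]

lemma hasDerivAt_comp_curve {w : 𝕜 → ι → 𝕜} {σ : 𝕜 → 𝕜} {w' : ι → 𝕜} {σ' t : 𝕜}
    (hφ : DifferentiableAt 𝕜 φ.uncurry (w t, σ t)) (hw : HasDerivAt w w' t)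
    (hσ : HasDerivAt σ σ' t) :
    HasDerivAt (fun s ↦ φ (w s) (σ s))
      (σ' * partialTau φ (w t) (σ t) + ∑ i, w' i * partialZ i φ (w t) (σ t)) t := by
  rw [← hasFDerivAt_apply_eq_sum_partial hφ.hasFDerivAt]
  exact hφ.hasFDerivAt.comp_hasDerivAt t (hw.prodMk hσ)

end PartialDerivatives

section ModularTransformation

open scoped MatrixGroups UpperHalfPlane
open UpperHalfPlane (num denom denom_ne_zero)

lemma coe_smul_eq_num_div_denom (g : SL(2, ℤ)) (τ : ℍ) : ↑(g • τ) = num g τ / denom g τ :=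
  UpperHalfPlane.coe_smul_of_det_pos (by simp) τ

lemma hasDerivAt_num_div_denom (g : SL(2, ℤ)) (τ : ℍ) :
    HasDerivAt (fun t ↦ num g t / denom g t) (1 / denom g τ ^ 2) (τ : ℂ) := by
  have hdet : (g : GL (Fin 2) ℝ).val.det = 1 := Matrix.SpecialLinearGroup.det_coe _
  have hsmul := (UpperHalfPlane.hasStrictDerivAt_smul (hdet ▸ one_pos) τ).hasDerivAt
  refine (hsmul.congr_of_eventuallyEq ?_).congr_deriv (by rw [hdet, ofReal_one])
  filter_upwards [UpperHalfPlane.isOpen_upperHalfPlaneSet.mem_nhds τ.im_pos] with t ht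
  rw [UpperHalfPlane.coe_smul_of_det_pos (by simp), UpperHalfPlane.ofComplex_apply_of_im_pos ht]

/-- The right action of `g` on row vectors `(k, l) ∈ ℤ²`. It describes the change of basis between
the lattices of `τ` and of `g • τ`. -/
def rowMulEquiv (g : SL(2, ℤ)) : (ℤ × ℤ) ≃ₗ[ℤ] ℤ × ℤ :=
  (LinearEquiv.finTwoArrow ℤ ℤ).symm ≪≫ₗ
    Matrix.SpecialLinearGroup.toLin' g.transpose ≪≫ₗ LinearEquiv.finTwoArrow ℤ ℤ

lemma rowMulEquiv_apply (g : SL(2, ℤ)) (p : ℤ × ℤ) :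
    rowMulEquiv g p = (p.1 * g 0 0 + p.2 * g 1 0, p.1 * g 0 1 + p.2 * g 1 1) := by
  ext <;> simp [rowMulEquiv, Matrix.SpecialLinearGroup.toLin'_apply, mul_comm]

lemma intCast_mul_smul_add (g : SL(2, ℤ)) (τ : ℍ) (p : ℤ × ℤ) :
    (p.1 * ↑(g • τ) + p.2 : ℂ) =
      ((rowMulEquiv g p).1 * τ + (rowMulEquiv g p).2) / denom g τ := by
  rw [eq_div_iff (denom_ne_zero g τ), coe_smul_eq_num_div_denom, add_mul, mul_assoc,
    div_mul_cancel₀ _ (denom_ne_zero g τ), rowMulEquiv_apply, num, denom]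
  simp only [Matrix.SpecialLinearGroup.coe_GL_coe_matrix, Matrix.SpecialLinearGroup.map_apply_coe,
    RingHom.mapMatrix_apply, Int.coe_castRingHom, Matrix.map_apply, ofReal_intCast, Int.cast_add,
    Int.cast_mul]
  ring

lemma wp1_summand_div {J : ℂ} (hJ : J ≠ 0) (z w : ℂ) :
    1 / (z / J - w / J) + 1 / (w / J) + z / J / (w / J) ^ 2 =
      J * (1 / (z - w) + 1 / w + z / w ^ 2) := by
  have h : z / J / (w / J) ^ 2 = J * (z / w ^ 2) := by
    field_simp
  rw [← sub_div, one_div_div, one_div_div, h]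
  ring

lemma wp1_smul (g : SL(2, ℤ)) (τ : ℍ) (z : ℂ) :
    wp1 (z / denom g τ) ↑(g • τ) = denom g τ * wp1 z τ := by
  simp only [wp1, intCast_mul_smul_add, wp1_summand_div (denom_ne_zero g τ), tsum_mul_left]
  rw [mul_add, one_div_div, mul_one_div]
  congr 2
  let e : {p : ℤ × ℤ // p ≠ (0, 0)} ≃ {p : ℤ × ℤ // p ≠ (0, 0)} :=
    (rowMulEquiv g).toEquiv.subtypeEquiv fun p ↦ (rowMulEquiv g).map_ne_zero_iff.symm
  exact e.tsum_eq fun p ↦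
    1 / (z - (p.1.1 * τ + p.1.2)) + 1 / (p.1.1 * τ + p.1.2) + z / (p.1.1 * τ + p.1.2) ^ 2

-- Subtracting the telescoping series `∑ (1 / (mτ + l) - 1 / (mτ + l + 1)) = 0` makes the double
-- series over `(m, l)` absolutely convergent.
open EisensteinSeries in
lemma e2Summand_eq_tsum_inv_sq_mul (τ : ℍ) {m : ℤ} (hm : m ≠ 0) :
    e2Summand m τ = ∑' l : ℤ, (((m : ℂ) * τ + l) ^ 2 * (m * τ + l + 1))⁻¹ := by
  have hne (c : ℝ) : (m * τ + c : ℂ) ≠ 0 := by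
    simpa using UpperHalfPlane.linear_ne_zero (cd := ![(m : ℝ), c]) τ (by simp [hm])
  have hs : Summable fun l : ℤ ↦ 1 / ((m : ℂ) * τ + l) - 1 / (m * τ + l + 1) :=
    summable_right_one_div_linear_sub_one_div_linear_succ τ m
  have htele : ∑' l : ℤ, (1 / ((m : ℂ) * τ + l) - 1 / (m * τ + l + 1)) = 0 :=
    (tsum_eq_of_summable_unconditional hs).symm.trans
      (tsum_symmetricIco_linear_sub_linear_add_one_eq_zero τ m)
  rw [← sub_zero (e2Summand m τ), ← htele, e2Summand, ← (e2Summand_summable m τ).tsum_sub hs]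
  refine tsum_congr fun l ↦ ?_
  have h1 : (m * τ + l : ℂ) ≠ 0 := mod_cast hne l
  have h2 : (m * τ + l + 1 : ℂ) ≠ 0 := by simpa [add_assoc] using hne (l + 1)
  simp only [eisSummand, Matrix.cons_val_zero, Matrix.cons_val_one, zpow_neg, zpow_ofNat]
  field_simp
  ring

open EisensteinSeries in
lemma summable_e2Summand (τ : ℍ) : Summable (e2Summand · τ) := by
  have hcubic : Summable fun m : Fin 2 → ℤ ↦
      (((m 0 : ℂ) * τ + m 1) ^ 2 * (m 0 * τ + m 1 + 1))⁻¹ := by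
    apply summable_of_isBigO_rpow_norm (a := 3) (by norm_num)
    simpa [pow_three, pow_two, ← mul_assoc] using ((isBigO_linear_add_const_vec τ 0 1).mul
      (isBigO_linear_add_const_vec τ 0 0)).mul (isBigO_linear_add_const_vec τ 0 0)
  refine ((finTwoArrowEquiv ℤ).symm.summable_iff.mpr hcubic).prod.congr_cofinite ?_
  filter_upwards [Filter.eventually_cofinite_ne (0 : ℤ)] with m hm
  exact (e2Summand_eq_tsum_inv_sq_mul τ hm).symm

lemma G2_coe (τ : ℍ) : G2 τ = EisensteinSeries.G2 τ := by
  have hcompl (m : ℤ) : m ≠ 0 ↔ m ∉ ({0} : Finset ℤ) := by simp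
  rw [EisensteinSeries.G2, tsum_eq_of_summable_unconditional (summable_e2Summand τ),
    ← (summable_e2Summand τ).sum_add_tsum_subtype_compl {0}, Finset.sum_singleton,
    EisensteinSeries.e2Summand_zero_eq_two_riemannZeta_two, riemannZeta_two, G2,
    ← (Equiv.subtypeEquivRight hcompl).tsum_eq]
  congr 1
  · ring
  · refine tsum_congr fun m ↦ tsum_congr fun l ↦ ?_
    simp [EisensteinSeries.eisSummand, zpow_ofNat]

lemma G2_smul (g : SL(2, ℤ)) (τ : ℍ) :
    G2 ↑(g • τ) = denom g τ ^ 2 * G2 τ - 2 * π * I * g 1 0 * denom g τ := by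
  have hslash := congrFun (EisensteinSeries.G2_slash_action g) τ
  rw [ModularForm.SL_slash_apply, Pi.sub_apply, ← G2_coe, ← G2_coe, EisensteinSeries.D2] at hslash
  have hJ := denom_ne_zero g τ
  simp only [zpow_neg, zpow_ofNat] at hslash
  field_simp at hslash
  linear_combination hslash

end ModularTransformation

section Domain

lemma eq_mul_add_iff_of_im_ne_zero {z τ : ℂ} (hτ : τ.im ≠ 0) (k l : ℝ) :
    z = k * τ + l ↔ k = z.im / τ.im ∧ l = z.re - z.im / τ.im * τ.re := by
  have hre : (k * τ + l).re = k * τ.re + l := by simp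
  have him : (k * τ + l).im = k * τ.im := by simp
  rw [Complex.ext_iff, hre, him, and_comm, eq_div_iff hτ, eq_comm (a := z.im)]
  refine and_congr_right fun hk ↦ ?_
  rw [← hk, mul_div_cancel_right₀ _ hτ, eq_sub_iff_add_eq', eq_comm]

lemma isOpen_setOf_forall_ne_intCast_mul_add :
    IsOpen {p : ℂ × ℂ | 0 < p.2.im ∧ ∀ k l : ℤ, p.1 ≠ k * p.2 + l} := by
  let coords (p : ℂ × ℂ) : ℝ × ℝ := (p.1.im / p.2.im, p.1.re - p.1.im / p.2.im * p.2.re)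
  let integral : Set (ℝ × ℝ) := Set.range ((↑) : ℤ → ℝ) ×ˢ Set.range ((↑) : ℤ → ℝ)
  have hclosed : IsClosed integral := Int.isClosedEmbedding_coe_real.isClosed_range.prod
    Int.isClosedEmbedding_coe_real.isClosed_range
  have hcont : ContinuousOn coords {p | 0 < p.2.im} := by
    have hne : ∀ p ∈ {p : ℂ × ℂ | 0 < p.2.im}, p.2.im ≠ 0 := fun p hp ↦ ne_of_gt hp
    fun_prop (disch := assumption)
  convert hcont.isOpen_inter_preimage (isOpen_lt continuous_const (by fun_prop))
    hclosed.isOpen_compl using 1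
  ext p
  refine and_congr_right fun hp ↦ ?_
  have hiff (k l : ℤ) := eq_mul_add_iff_of_im_ne_zero (z := p.1) (ne_of_gt hp) k l
  simp only [ofReal_intCast] at hiff
  simp only [Set.mem_preimage, Set.mem_compl_iff, integral, Set.mem_prod, Set.mem_range, coords,
    Ne, hiff, ← not_exists, exists_and_left, exists_and_right]

lemma isOpen_Uset (n : ℕ) : IsOpen (Uset n) := by
  have hUset : Uset n = {p | 0 < p.2.im} ∩ ⋂ (i) (j) (_ : i ≠ j),
      (fun p ↦ (p.1 i - p.1 j, p.2)) ⁻¹'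
        {p : ℂ × ℂ | 0 < p.2.im ∧ ∀ k l : ℤ, p.1 ≠ k * p.2 + l} := by
    ext p
    simp +contextual [Uset]
  rw [hUset]
  refine (isOpen_lt continuous_const (by fun_prop)).inter ?_
  exact isOpen_iInter_of_finite fun i ↦ isOpen_iInter_of_finite fun j ↦
    isOpen_iInter_of_finite fun _ ↦ isOpen_setOf_forall_ne_intCast_mul_add.preimage (by fun_prop)

open scoped MatrixGroups UpperHalfPlane in
lemma smul_mem_Uset {n : ℕ} (g : SL(2, ℤ)) {z : Fin n → ℂ} {τ : ℍ} (h : (z, ↑τ) ∈ Uset n) :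
    ((fun i ↦ z i / UpperHalfPlane.denom g τ, ↑(g • τ)) : (Fin n → ℂ) × ℂ) ∈ Uset n := by
  refine ⟨(g • τ).im_pos, fun i j hij k l ↦ ?_⟩
  rw [intCast_mul_smul_add g τ (k, l), ← sub_div, Ne,
    div_left_inj' (UpperHalfPlane.denom_ne_zero g τ)]
  exact h.2 i j hij _ _

end Domain

section SlashAction

open scoped MatrixGroups UpperHalfPlane
open UpperHalfPlane (num denom denom_ne_zero)

-- For `C ≠ 0` the point `Cτ + D` is not real; for `C = 0`, where it may lie on the branch cut of
-- `f`, the composition is constant.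
lemma hasDerivAt_comp_denom (g : SL(2, ℤ)) (τ : ℍ) {f : ℂ → ℂ} {f' : ℂ}
    (hf : denom g τ ∈ slitPlane → HasDerivAt f f' (denom g τ)) :
    HasDerivAt (fun t ↦ f (denom g t)) (f' * g 1 0) (τ : ℂ) := by
  rcases eq_or_ne (g 1 0) 0 with hC | hC
  · simpa [denom, hC] using hasDerivAt_const (τ : ℂ) (f (g 1 1))
  · have hdenom : HasDerivAt (denom g) (g 1 0) (τ : ℂ) :=
      (((hasDerivAt_id (τ : ℂ)).const_mul _).add_const _).congr_deriv (mul_one _)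
    have hslit : denom g τ ∈ slitPlane := by
      simp [mem_slitPlane_iff, denom, hC, τ.im_ne_zero]
    exact (hf hslit).comp (τ : ℂ) hdenom

/-- Families `Φ = (φ_μ)` of functions `φ_μ(z₁, …, z_n; τ)` indexed by multi-indices `μ ∈ ℕⁿ`. -/
abbrev FunctionFamily (n : ℕ) : Type := (Fin n → ℕ) → (Fin n → ℂ) → ℂ → ℂ

/-- The operator `W_a = a + S + E`, with `S` the index shift and `E` the Euler operator. The
weight-`a` slash action is `(Cτ + D)^{-W_a}` up to the change of variable in `τ`. -/
noncomputable def weightOp {n : ℕ} (a : ℂ) (Φ : FunctionFamily n) : FunctionFamily n :=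
  (fun μ z τ ↦ a * Φ μ z τ) + shiftSum Φ + fun μ ↦ eulerZ (Φ μ)

variable {n : ℕ} {g : SL(2, ℤ)} {Φ Ψ : FunctionFamily n}

lemma slashAct_apply (a : ℂ) (μ : Fin n → ℕ) (z : Fin n → ℂ) (τ : ℂ) :
    SlashAct n g a Φ μ z τ = denom g τ ^ (-a) * expShift (-log (denom g τ))
      fun ν ↦ Φ (μ + ν) (fun i ↦ z i / denom g τ) (num g τ / denom g τ) :=
  rfl

lemma slashAct_add (a : ℂ) (hΦ : Φ.HasFiniteSupport) (hΨ : Ψ.HasFiniteSupport) :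
    SlashAct n g a (Φ + Ψ) = SlashAct n g a Φ + SlashAct n g a Ψ := by
  ext μ z τ
  have heval {Θ : FunctionFamily n} (hΘ : Θ.HasFiniteSupport) (w : Fin n → ℂ) (σ : ℂ) :
      (fun ν ↦ Θ (μ + ν) w σ).HasFiniteSupport :=
    (hasFiniteSupport_comp_add hΘ μ).fun_comp (g := fun φ ↦ φ w σ) rfl
  simp only [slashAct_apply, Pi.add_apply, ← mul_add]
  rw [← expShift_add _ (heval hΦ _ _) (heval hΨ _ _)]
  rfl

lemma slashAct_sub (a : ℂ) (hΦ : Φ.HasFiniteSupport) (hΨ : Ψ.HasFiniteSupport) :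
    SlashAct n g a (Φ - Ψ) = SlashAct n g a Φ - SlashAct n g a Ψ :=
  eq_sub_of_add_eq (by rw [← slashAct_add a (hΦ.sub hΨ) hΨ, sub_add_cancel])

lemma slashAct_mul (a : ℂ) (h : (Fin n → ℂ) → ℂ → ℂ) (μ : Fin n → ℕ) (z : Fin n → ℂ) (τ : ℍ) :
    SlashAct n g a (fun μ z τ ↦ h z τ * Φ μ z τ) μ z τ =
      h (fun i ↦ z i / denom g τ) ↑(g • τ) * SlashAct n g a Φ μ z τ := by
  simp only [slashAct_apply, expShift_const_mul, ← coe_smul_eq_num_div_denom]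
  ring

lemma hasFiniteSupport_mul (hΦ : Φ.HasFiniteSupport) (h : (Fin n → ℂ) → ℂ → ℂ) :
    Function.HasFiniteSupport fun μ z τ ↦ h z τ * Φ μ z τ :=
  hΦ.fun_comp (g := fun φ z τ ↦ h z τ * φ z τ) (by ext; simp)

lemma slashAct_sum {κ : Type*} (s : Finset κ) (a : ℂ) {Φ : κ → FunctionFamily n}
    (hΦ : ∀ k, (Φ k).HasFiniteSupport) :
    SlashAct n g a (∑ k ∈ s, Φ k) = ∑ k ∈ s, SlashAct n g a (Φ k) := by
  classical
  induction s using Finset.induction_on with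
  | empty => ext; simp [SlashAct]
  | insert k s hk ih =>
    have hsum : (∑ k ∈ s, Φ k).HasFiniteSupport := Finset.sum_fn s Φ ▸ .sum hΦ s
    rw [Finset.sum_insert hk, Finset.sum_insert hk, slashAct_add a (hΦ k) hsum, ih]

lemma slashAct_add_natCast (a : ℂ) (m : ℕ) (μ : Fin n → ℕ) (z : Fin n → ℂ) (τ : ℍ) :
    SlashAct n g (a + m) Φ μ z τ = SlashAct n g a Φ μ z τ / denom g τ ^ m := by
  rw [slashAct_apply, slashAct_apply, neg_add', cpow_sub _ _ (denom_ne_zero g τ), cpow_natCast,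
    div_mul_eq_mul_div]

lemma slashAct_add_one (a : ℂ) (μ : Fin n → ℕ) (z : Fin n → ℂ) (τ : ℍ) :
    SlashAct n g (a + 1) Φ μ z τ = SlashAct n g a Φ μ z τ / denom g τ := by
  simpa only [Nat.cast_one, pow_one] using slashAct_add_natCast a 1 μ z τ

lemma slashAct_add_two (a : ℂ) (μ : Fin n → ℕ) (z : Fin n → ℂ) (τ : ℍ) :
    SlashAct n g (a + 2) Φ μ z τ = SlashAct n g a Φ μ z τ / denom g τ ^ 2 :=
  mod_cast slashAct_add_natCast a 2 μ z τ

lemma slashAct_shiftSum (a : ℂ) (hΦ : Φ.HasFiniteSupport) :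
    SlashAct n g a (shiftSum Φ) = shiftSum (SlashAct n g a Φ) := by
  have hshift : shiftSum Φ = ∑ i, fun μ ↦ Φ (μ + Pi.single i 1) := by
    ext; simp [shiftSum]
  rw [hshift, slashAct_sum _ _ fun i ↦
    hΦ.fun_comp_of_injective (add_left_injective (Pi.single i 1))]
  ext μ z τ
  simp [shiftSum, slashAct_apply, add_right_comm]

lemma hasFiniteSupport_eulerZ (hΦ : Φ.HasFiniteSupport) :
    Function.HasFiniteSupport fun μ ↦ eulerZ (Φ μ) :=
  hΦ.fun_comp (by ext; simp [eulerZ, partialZ_zero])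

lemma hasFiniteSupport_weightOp (hΦ : Φ.HasFiniteSupport) (a : ℂ) :
    (weightOp a Φ).HasFiniteSupport :=
  ((hasFiniteSupport_mul hΦ fun _ _ ↦ a).add (hasFiniteSupport_shiftSum hΦ)).add
    (hasFiniteSupport_eulerZ hΦ)

variable {μ : Fin n → ℕ} {z : Fin n → ℂ} {τ : ℍ}

lemma partialZ_slashAct (a : ℂ) (hΦ : Φ.HasFiniteSupport)
    (hdiff : ∀ ν, DifferentiableAt ℂ (Φ ν).uncurry (fun i ↦ z i / denom g τ, ↑(g • τ)))
    (i : Fin n) :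
    partialZ i (SlashAct n g a Φ μ) z τ =
      SlashAct n g (a + 1) (fun ν ↦ partialZ i (Φ ν)) μ z τ := by
  have hpoint : HasDerivAt (fun s k ↦ Function.update z i s k / denom g τ)
      (fun k ↦ Pi.single (M := fun _ ↦ ℂ) i 1 k / denom g τ) (z i) :=
    hasDerivAt_pi.2 fun k ↦ (hasDerivAt_pi.1 (hasDerivAt_update z i (z i)) k).div_const _
  have hderiv (ν : Fin n → ℕ) :
      HasDerivAt (fun s ↦ Φ ν (fun k ↦ Function.update z i s k / denom g τ) ↑(g • τ))
        ((denom g τ)⁻¹ * partialZ i (Φ ν) (fun k ↦ z k / denom g τ) ↑(g • τ)) (z i) := by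
    refine (hasDerivAt_comp_curve (by simpa using hdiff ν) hpoint
      (hasDerivAt_const _ _)).congr_deriv ?_
    simp [Pi.single_apply, ite_div]
  have hseries := hasDerivAt_expShift (hasDerivAt_const (z i) (-log (denom g τ)))
    (fun ν ↦ hderiv (μ + ν)) ((hasFiniteSupport_comp_add hΦ μ).fun_comp
      (g := fun φ s ↦ φ (fun k ↦ Function.update z i s k / denom g τ) ↑(g • τ)) rfl)
  have hslash := (hseries.const_mul (denom g τ ^ (-a))).deriv
  rw [slashAct_add_one, slashAct_apply, ← coe_smul_eq_num_div_denom]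
  simp only [partialZ, slashAct_apply, ← coe_smul_eq_num_div_denom] at hslash ⊢
  rw [hslash, zero_mul, zero_add, expShift_const_mul]
  ring

lemma slashAct_eulerZ (a : ℂ) (hΦ : Φ.HasFiniteSupport)
    (hdiff : ∀ ν, DifferentiableAt ℂ (Φ ν).uncurry (fun i ↦ z i / denom g τ, ↑(g • τ))) :
    SlashAct n g a (fun ν ↦ eulerZ (Φ ν)) μ z τ = eulerZ (SlashAct n g a Φ μ) z τ := by
  have heuler : (fun ν ↦ eulerZ (Φ ν)) = ∑ i, fun ν z τ ↦ z i * partialZ i (Φ ν) z τ := by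
    ext; simp [eulerZ]
  rw [heuler, slashAct_sum _ _ fun i ↦
    hasFiniteSupport_mul (hΦ.fun_comp (partialZ_zero i)) fun z _ ↦ z i]
  simp only [Finset.sum_apply, eulerZ]
  refine Finset.sum_congr rfl fun i _ ↦ ?_
  rw [slashAct_mul a (fun z _ ↦ z i), partialZ_slashAct a hΦ hdiff, slashAct_add_one]
  ring

lemma slashAct_weightOp (a b : ℂ) (hΦ : Φ.HasFiniteSupport)
    (hdiff : ∀ ν, DifferentiableAt ℂ (Φ ν).uncurry (fun i ↦ z i / denom g τ, ↑(g • τ))) :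
    SlashAct n g a (weightOp b Φ) μ z τ = weightOp b (SlashAct n g a Φ) μ z τ := by
  have hconst := hasFiniteSupport_mul hΦ fun _ _ ↦ b
  have hshift := hasFiniteSupport_shiftSum hΦ
  rw [weightOp, slashAct_add a (hconst.add hshift) (hasFiniteSupport_eulerZ hΦ),
    slashAct_add a hconst hshift, slashAct_shiftSum a hΦ]
  simp only [weightOp, Pi.add_apply, slashAct_eulerZ a hΦ hdiff, slashAct_mul a fun _ _ ↦ b]

lemma hasDerivAt_comp_smul {φ : (Fin n → ℂ) → ℂ → ℂ}
    (hφ : DifferentiableAt ℂ φ.uncurry (fun i ↦ z i / denom g τ, ↑(g • τ))) :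
    HasDerivAt (fun t ↦ φ (fun i ↦ z i / denom g t) (num g t / denom g t))
      ((denom g τ ^ 2)⁻¹ * partialTau φ (fun i ↦ z i / denom g τ) ↑(g • τ) -
        g 1 0 / denom g τ * eulerZ φ (fun i ↦ z i / denom g τ) ↑(g • τ)) (τ : ℂ) := by
  have hJ := denom_ne_zero g τ
  have hpoint : HasDerivAt (fun t i ↦ z i / denom g t)
      (fun i ↦ -(g 1 0 / denom g τ) * (z i / denom g τ)) (τ : ℂ) := by
    refine hasDerivAt_pi.2 fun i ↦ ?_
    refine (hasDerivAt_comp_denom g τ (f := (z i / ·)) fun _ ↦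
      ((hasDerivAt_inv hJ).const_mul (z i))).congr_deriv ?_
    field_simp
  rw [coe_smul_eq_num_div_denom] at hφ ⊢
  refine (hasDerivAt_comp_curve hφ hpoint (hasDerivAt_num_div_denom g τ)).congr_deriv ?_
  simp only [eulerZ, Finset.mul_sum, neg_mul, Finset.sum_neg_distrib, one_div, mul_assoc,
    sub_eq_add_neg]

lemma shiftSum_apply_comp_add (w : Fin n → ℂ) (σ : ℂ) :
    (shiftSum fun ν ↦ Φ (μ + ν) w σ) = fun ν ↦ shiftSum Φ (μ + ν) w σ := by
  ext ν
  simp only [shiftSum, add_assoc, Finset.sum_apply]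

lemma partialTau_slashAct (a : ℂ) (hΦ : Φ.HasFiniteSupport)
    (hdiff : ∀ ν, DifferentiableAt ℂ (Φ ν).uncurry (fun i ↦ z i / denom g τ, ↑(g • τ))) :
    partialTau (SlashAct n g a Φ μ) z τ =
      SlashAct n g (a + 2) (fun ν ↦ partialTau (Φ ν)) μ z τ -
        g 1 0 * SlashAct n g (a + 1) (weightOp a Φ) μ z τ := by
  have hJ := denom_ne_zero g τ
  have hlog := hasDerivAt_comp_denom g τ hasDerivAt_log
  have hpow := hasDerivAt_comp_denom g τ fun h ↦ (hasDerivAt_id _).cpow_const (c := -a) h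
  have hseries := hasDerivAt_expShift hlog.neg (fun ν ↦ hasDerivAt_comp_smul (hdiff (μ + ν)))
    ((hasFiniteSupport_comp_add hΦ μ).fun_comp
      (g := fun φ t ↦ φ (fun i ↦ z i / denom g t) (num g t / denom g t)) rfl)
  have hslash : partialTau (SlashAct n g a Φ μ) z τ =
      -(g 1 0 / denom g τ) * (a * SlashAct n g a Φ μ z τ + SlashAct n g a (shiftSum Φ) μ z τ) +
        SlashAct n g a ((fun ν w σ ↦ (denom g τ ^ 2)⁻¹ * partialTau (Φ ν) w σ) -
          fun ν w σ ↦ g 1 0 / denom g τ * eulerZ (Φ ν) w σ) μ z τ := by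
    refine (hpow.mul hseries).deriv.trans ?_
    simp only [slashAct_apply, shiftSum_apply_comp_add, cpow_sub _ _ hJ, cpow_one, id_eq,
      Pi.sub_apply, Pi.neg_apply, ← coe_smul_eq_num_div_denom]
    ring
  rw [hslash, slashAct_sub a (hasFiniteSupport_mul (hΦ.fun_comp partialTau_zero) fun _ _ ↦ _)
    (hasFiniteSupport_mul (hasFiniteSupport_eulerZ hΦ) fun _ _ ↦ _), slashAct_add_one,
    slashAct_add_two, slashAct_weightOp a a hΦ hdiff]
  simp only [Pi.sub_apply, slashAct_mul a fun _ _ ↦ _, weightOp, Pi.add_apply,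
    slashAct_eulerZ a hΦ hdiff, slashAct_shiftSum a hΦ]
  ring

lemma DOp_eq (a : ℂ) (j : Fin n) (Φ : FunctionFamily n) :
    DOp n a j Φ = (fun μ z τ ↦ 2 * π * I * partialTau (Φ μ) z τ) +
      (fun μ z τ ↦ G2 τ * weightOp a Φ μ z τ) -
      ∑ i with i ≠ j, fun μ z τ ↦ wp1 (z i - z j) τ * partialZ i (Φ μ) z τ := by
  ext μ z τ
  simp only [DOp, weightOp, shiftSum, eulerZ, partialTau, partialZ, Pi.add_apply, Pi.sub_apply,
    Finset.sum_apply]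
  ring

lemma slashAct_DOp (a b : ℂ) (j : Fin n) (hΦ : Φ.HasFiniteSupport) :
    SlashAct n g b (DOp n a j Φ) μ z τ =
      2 * π * I * SlashAct n g b (fun ν ↦ partialTau (Φ ν)) μ z τ +
        G2 ↑(g • τ) * SlashAct n g b (weightOp a Φ) μ z τ -
          ∑ i with i ≠ j, wp1 ((z i - z j) / denom g τ) ↑(g • τ) *
            SlashAct n g b (fun ν ↦ partialZ i (Φ ν)) μ z τ := by
  have htau := hasFiniteSupport_mul (hΦ.fun_comp partialTau_zero) fun _ _ ↦ 2 * π * I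
  have hweight := hasFiniteSupport_mul (hasFiniteSupport_weightOp hΦ a) fun _ σ ↦ G2 σ
  have hz (i : Fin n) := hasFiniteSupport_mul (hΦ.fun_comp (partialZ_zero i))
    fun w σ ↦ wp1 (w i - w j) σ
  have hzsum := Function.HasFiniteSupport.sum hz {i | i ≠ j}
  rw [← Finset.sum_fn] at hzsum
  rw [DOp_eq, slashAct_sub b (htau.add hweight) hzsum, slashAct_add b htau hweight,
    slashAct_sum _ _ hz]
  simp only [Pi.add_apply, Pi.sub_apply, Finset.sum_apply, sub_div,
    slashAct_mul b fun _ _ ↦ 2 * π * I, slashAct_mul b fun _ σ ↦ G2 σ,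
    slashAct_mul b fun w σ ↦ wp1 (w _ - w j) σ]

end SlashAction

/-- For every `Φ ∈ χ` (a family of holomorphic functions on `U`, with components
vanishing for large indices), every `a ∈ ℂ`, every `g ∈ SL₂(ℤ)` and every `j`:
`𝒟_j(a)(Φ|_{g,a}) = (𝒟_j(a)Φ)|_{g,a+2}` on `U`. -/
theorem DOp_slash_commute (n : ℕ) (hn : 1 ≤ n)
    (Φ : (Fin n → ℕ) → (Fin n → ℂ) → ℂ → ℂ)
    (hΦhol : ∀ μ, DifferentiableOn ℂ (fun p : (Fin n → ℂ) × ℂ => Φ μ p.1 p.2) (Uset n))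
    (hΦfin : ∃ N : ℕ, ∀ μ : Fin n → ℕ, (∃ i, N ≤ μ i) → Φ μ = 0)
    (a : ℂ) (g : Matrix.SpecialLinearGroup (Fin 2) ℤ) (j : Fin n) :
    ∀ (z : Fin n → ℂ) (τ : ℂ), (z, τ) ∈ Uset n → ∀ μ : Fin n → ℕ,
      DOp n a j (SlashAct n g a Φ) μ z τ = SlashAct n g (a + 2) (DOp n a j Φ) μ z τ := by
  intro z τ hU μ
  obtain ⟨N, hN⟩ := hΦfin
  have hΦ : Φ.HasFiniteSupport := hasFiniteSupport_of_forall_exists_le hN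
  lift τ to UpperHalfPlane using hU.1
  have hJ := UpperHalfPlane.denom_ne_zero g τ
  have hdiff (ν : Fin n → ℕ) :=
    (hΦhol ν).differentiableAt ((isOpen_Uset n).mem_nhds (smul_mem_Uset g hU))
  rw [slashAct_DOp a (a + 2) j hΦ, DOp_eq]
  simp only [Pi.add_apply, Pi.sub_apply, Finset.sum_apply, partialTau_slashAct a hΦ hdiff,
    partialZ_slashAct a hΦ hdiff, ← slashAct_weightOp a a hΦ hdiff, G2_smul, wp1_smul,
    slashAct_add_one, slashAct_add_two]
  congr 1
  · -- the anomaly of `G2` cancels the `weightOp` term of `∂/∂τ`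
    field_simp
    ring
  · refine Finset.sum_congr rfl fun i _ ↦ ?_
    field_simp
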